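/- arXiv:2011.10876 — 3 statements merged into one kernel-verified Lean document; each statement's English description precedes it below -/
import Mathlib

section
/- Suppose there exist a constant C > 0 and a function κ of class K∞ such that for all i ∈ ℕ and all x_i ∈ ℝ^{n_i}, x̄_i ∈ X(I_i), u_i ∈ ℝ^{p_i} one has |f_i(x_i, x̄_i, u_i)| ≤ C + κ(|x_i|) + κ(|x̄_i|) + κ(|u_i|). Then the network Σ is well-posed, and moreover there exist C' > 0 and κ' of class K∞ such that |f(x,u)|_∞ ≤ C' + κ'(|x|_∞) + κ'(|u|_∞) for all x ∈ X and u ∈ U. -/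
noncomputable section

/-- Class `K` comparison functions on `[0,∞)`. -/
def ClassK (γ : ℝ → ℝ) : Prop :=
  ContinuousOn γ (Set.Ici 0) ∧ StrictMonoOn γ (Set.Ici 0) ∧ γ 0 = 0

/-- Class `K∞` comparison functions: class `K` and unbounded. -/
def ClassKinf (γ : ℝ → ℝ) : Prop :=
  ClassK γ ∧ ∀ c : ℝ, ∃ s : ℝ, 0 ≤ s ∧ c < γ s

section Network

variable {E : ℕ → Type*} [∀ i, NormedAddCommGroup (E i)]
variable {P : ℕ → Type*} [∀ i, NormedAddCommGroup (P i)]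

/-- Membership in `ℓ∞(ℕ,(n_i))`: a uniformly bounded sequence. -/
def Bdd {G : ℕ → Type*} [∀ i, NormedAddCommGroup (G i)] (x : ∀ i, G i) : Prop :=
  ∃ C : ℝ, ∀ i, ‖x i‖ ≤ C

/-- The sup norm `|x|_∞ = sup_i |x_i|`. -/
def supNorm {G : ℕ → Type*} [∀ i, NormedAddCommGroup (G i)] (x : ∀ i, G i) : ℝ :=
  ⨆ i, ‖x i‖

variable (I : ℕ → Finset ℕ)

/-- The network map `f(x,u) = (f_i(x_i, x̄_i, u_i))_{i∈ℕ}`. -/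
def netF (f : ∀ i, E i → ((j : I i) → E j.1) → P i → E i)
    (x : ∀ i, E i) (u : ∀ i, P i) : ∀ i, E i :=
  fun i => f i (x i) (fun j => x j.1) (u i)

theorem ClassK.monotoneOn {γ : ℝ → ℝ} (hγ : ClassK γ) : MonotoneOn γ (Set.Ici 0) :=
  hγ.2.1.monotoneOn

theorem ClassK.nonneg {γ : ℝ → ℝ} (hγ : ClassK γ) {s : ℝ} (hs : 0 ≤ s) : 0 ≤ γ s :=
  hγ.2.2.symm.le.trans (hγ.monotoneOn Set.self_mem_Ici hs hs)

theorem ClassK.const_mul {γ : ℝ → ℝ} (hγ : ClassK γ) {a : ℝ} (ha : 0 < a) :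
    ClassK fun s => a * γ s := by
  obtain ⟨hcont, hmono, hzero⟩ := hγ
  exact ⟨continuousOn_const.mul hcont,
    fun s hs t ht hst => mul_lt_mul_of_pos_left (hmono hs ht hst) ha,
    mul_eq_zero_of_right a hzero⟩

theorem ClassKinf.const_mul {γ : ℝ → ℝ} (hγ : ClassKinf γ) {a : ℝ} (ha : 0 < a) :
    ClassKinf fun s => a * γ s := by
  refine ⟨hγ.1.const_mul ha, fun c => ?_⟩
  obtain ⟨s, hs, hcs⟩ := hγ.2 (c / a)
  exact ⟨s, hs, (div_lt_iff₀' ha).1 hcs⟩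

section SupNorm

variable {G : ℕ → Type*} [∀ i, NormedAddCommGroup (G i)] {x : ∀ i, G i}

theorem supNorm_nonneg (x : ∀ i, G i) : 0 ≤ supNorm x :=
  Real.iSup_nonneg fun i => norm_nonneg (x i)

theorem Bdd.norm_le_supNorm (hx : Bdd x) (i : ℕ) : ‖x i‖ ≤ supNorm x := by
  obtain ⟨b, hb⟩ := hx
  exact le_ciSup (f := fun j => ‖x j‖) ⟨b, Set.forall_mem_range.2 hb⟩ i

theorem Bdd.norm_comp_le_supNorm {ι : Type*} [Fintype ι] (hx : Bdd x) (e : ι → ℕ) :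
    ‖fun k => x (e k)‖ ≤ supNorm x :=
  (pi_norm_le_iff_of_nonneg (supNorm_nonneg x)).2 fun k => hx.norm_le_supNorm (e k)

end SupNorm

-- The factor 2 arises because `|x_i|` and `|x̄_i|` are each at most `|x|_∞`.
theorem norm_netF_le {f : ∀ i, E i → ((j : I i) → E j.1) → P i → E i} {i : ℕ}
    {C : ℝ} {κ : ℝ → ℝ} (hκ : MonotoneOn κ (Set.Ici 0))
    (hbound : ∀ (xi : E i) (xb : (j : I i) → E j.1) (ui : P i),
      ‖f i xi xb ui‖ ≤ C + κ ‖xi‖ + κ ‖xb‖ + κ ‖ui‖)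
    {x : ∀ i, E i} {u : ∀ i, P i} (hx : Bdd x) (hu : Bdd u) :
    ‖netF I f x u i‖ ≤ C + 2 * κ (supNorm x) + κ (supNorm u) := by
  have κ_mono {s t : ℝ} (hs : 0 ≤ s) (hst : s ≤ t) : κ s ≤ κ t := hκ hs (hs.trans hst) hst
  calc ‖netF I f x u i‖
      ≤ C + κ ‖x i‖ + κ ‖fun j : I i => x j.1‖ + κ ‖u i‖ := hbound _ _ _
    _ ≤ C + κ (supNorm x) + κ (supNorm x) + κ (supNorm u) := by
        gcongr
        · exact κ_mono (norm_nonneg _) (hx.norm_le_supNorm i)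
        · exact κ_mono (norm_nonneg _) (hx.norm_comp_le_supNorm Subtype.val)
        · exact κ_mono (norm_nonneg _) (hu.norm_le_supNorm i)
    _ = C + 2 * κ (supNorm x) + κ (supNorm u) := by ring

theorem stmt0_general
    (f : ∀ i, E i → ((j : I i) → E j.1) → P i → E i)
    (C : ℝ) (hC : 0 < C) (κ : ℝ → ℝ) (hκ : ClassKinf κ)
    (hbound : ∀ (i : ℕ) (xi : E i) (xb : (j : I i) → E j.1) (ui : P i),
      ‖f i xi xb ui‖ ≤ C + κ ‖xi‖ + κ ‖xb‖ + κ ‖ui‖) :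
    (∀ (x : ∀ i, E i) (u : ∀ i, P i), Bdd x → Bdd u → Bdd (netF I f x u)) ∧
      ∃ C' : ℝ, 0 < C' ∧ ∃ κ' : ℝ → ℝ, ClassKinf κ' ∧
        ∀ (x : ∀ i, E i) (u : ∀ i, P i), Bdd x → Bdd u →
          supNorm (netF I f x u) ≤ C' + κ' (supNorm x) + κ' (supNorm u) := by
  have norm_le {x : ∀ i, E i} {u : ∀ i, P i} (hx : Bdd x) (hu : Bdd u) (i : ℕ) :
      ‖netF I f x u i‖ ≤ C + 2 * κ (supNorm x) + κ (supNorm u) :=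
    norm_netF_le I hκ.1.monotoneOn (hbound i) hx hu
  refine ⟨fun x u hx hu => ⟨_, norm_le hx hu⟩,
    C, hC, fun s => 2 * κ s, hκ.const_mul two_pos, fun x u hx hu => ?_⟩
  calc supNorm (netF I f x u)
      ≤ C + 2 * κ (supNorm x) + κ (supNorm u) := ciSup_le (norm_le hx hu)
    _ ≤ C + 2 * κ (supNorm x) + 2 * κ (supNorm u) := by
        gcongr
        exact le_mul_of_one_le_left (hκ.1.nonneg (supNorm_nonneg u)) one_le_two

theorem stmt0
    [∀ i, NormedSpace ℝ (E i)] [∀ i, FiniteDimensional ℝ (E i)] [∀ i, Nontrivial (E i)]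
    [∀ i, NormedSpace ℝ (P i)] [∀ i, FiniteDimensional ℝ (P i)] [∀ i, Nontrivial (P i)]
    (hself : ∀ i, i ∉ I i)
    (hloc : ∀ i, {j | i ∈ I j}.Finite)
    (f : ∀ i, E i → ((j : I i) → E j.1) → P i → E i)
    (hf : ∀ i, Continuous fun q : E i × ((j : I i) → E j.1) × P i => f i q.1 q.2.1 q.2.2)
    (C : ℝ) (hC : 0 < C) (κ : ℝ → ℝ) (hκ : ClassKinf κ)
    (hbound : ∀ (i : ℕ) (xi : E i) (xb : (j : I i) → E j.1) (ui : P i),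
      ‖f i xi xb ui‖ ≤ C + κ ‖xi‖ + κ ‖xb‖ + κ ‖ui‖) :
    (∀ (x : ∀ i, E i) (u : ∀ i, P i), Bdd x → Bdd u → Bdd (netF I f x u)) ∧
      ∃ C' : ℝ, 0 < C' ∧ ∃ κ' : ℝ → ℝ, ClassKinf κ' ∧
        ∀ (x : ∀ i, E i) (u : ∀ i, P i), Bdd x → Bdd u →
          supNorm (netF I f x u) ≤ C' + κ' (supNorm x) + κ' (supNorm u) :=
  stmt0_general I f C hC κ hκ hbound

end Network
end
end

section
/- Let Σ be well-posed and A ⊆ X a nonempty closed set. Then Σ is ISS with respect to A if and only if f is K-bounded with respect to A and there exist M ∈ ℕ, β of class KL and γ of class K such that for every ξ ∈ X and every admissible input u, |x(Mk,ξ,u)|_A ≤ max{β(|ξ|_A, k), γ(‖u‖_∞)} for all k ∈ ℕ₀ (i.e. Σ^M is ISS with respect to A for some M). -/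
noncomputable section

/-- Class `KL` comparison functions. -/
def ClassKL (β : ℝ → ℝ → ℝ) : Prop :=
  ContinuousOn (fun p : ℝ × ℝ => β p.1 p.2) (Set.Ici 0 ×ˢ Set.Ici 0) ∧
    (∀ t : ℝ, 0 ≤ t → ClassK fun r => β r t) ∧
    (∀ r : ℝ, 0 < r → StrictAntiOn (β r) (Set.Ici 0) ∧
      Filter.Tendsto (fun t => β r t) Filter.atTop (nhds 0))

section System

variable {E : ℕ → Type*} [∀ i, NormedAddCommGroup (E i)]
variable {P : ℕ → Type*} [∀ i, NormedAddCommGroup (P i)]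

/-- Solution of the discrete-time system `x⁺ = F(x,u)` on `X = ℓ∞(ℕ,(n_i))`. -/
def traj (F : lp E ⊤ → lp P ⊤ → lp E ⊤) (ξ : lp E ⊤) (u : ℕ → lp P ⊤) : ℕ → lp E ⊤
  | 0 => ξ
  | k + 1 => F (traj F ξ u k) (u k)

/-- Admissible external inputs: uniformly bounded sequences in `U`. -/
def AdmInput (u : ℕ → lp P ⊤) : Prop :=
  ∃ C : ℝ, ∀ k, ‖u k‖ ≤ C

/-- `‖u‖_∞ = sup_k |u(k)|_∞`. -/
def inputNorm (u : ℕ → lp P ⊤) : ℝ :=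
  ⨆ k, ‖u k‖

/-- `Σ` is input-to-state stable with respect to the set `A`. -/
def ISS (F : lp E ⊤ → lp P ⊤ → lp E ⊤) (A : Set (lp E ⊤)) : Prop :=
  ∃ β γ : _, ClassKL β ∧ ClassK γ ∧
    ∀ (ξ : lp E ⊤) (u : ℕ → lp P ⊤), AdmInput u →
      ∀ k : ℕ, Metric.infDist (traj F ξ u k) A ≤
        max (β (Metric.infDist ξ A) (k : ℝ)) (γ (inputNorm u))

/-- `Σ` is exponentially input-to-state stable with respect to the set `A`. -/
def eISS (F : lp E ⊤ → lp P ⊤ → lp E ⊤) (A : Set (lp E ⊤)) : Prop :=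
  ∃ C ρ : ℝ, ∃ γ : ℝ → ℝ, 1 ≤ C ∧ 0 ≤ ρ ∧ ρ < 1 ∧ ClassK γ ∧
    ∀ (ξ : lp E ⊤) (u : ℕ → lp P ⊤), AdmInput u →
      ∀ k : ℕ, Metric.infDist (traj F ξ u k) A ≤
        max (C * ρ ^ k * Metric.infDist ξ A) (γ (inputNorm u))

/-- `f` is `K`-bounded with respect to `A`. -/
def KBounded (F : lp E ⊤ → lp P ⊤ → lp E ⊤) (A : Set (lp E ⊤)) : Prop :=
  ∃ κ₁ κ₂ : ℝ → ℝ, ClassK κ₁ ∧ ClassK κ₂ ∧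
    ∀ (ξ : lp E ⊤) (μ : lp P ⊤),
      Metric.infDist (F ξ μ) A ≤ κ₁ (Metric.infDist ξ A) + κ₂ ‖μ‖

/-!
Write `v k = |x(k)|_A` and `s = ‖u‖_∞`. Since `f` is `K`-bounded, `v (k + 1) ≤ κ₁ (v k) + κ₂ s`,
and nothing else about a single step is needed. With `σ = id + κ₁ + κ₂` this gives
`max (v (k + 1)) s ≤ σ (max (v k) s)`, so over at most `M` steps `v` is controlled by the gain
`σ^[M]`. Starting from the last multiple of `M` up to `k`, the decay of `v` along the multiples of
`M` therefore extends to all times, with time running `M` times slower and delayed by one block.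
Conversely, the ISS estimate at time `1` under a constant input is a `K`-bound on `f`.
-/

open Set Filter Topology

namespace ClassK

variable {γ δ : ℝ → ℝ} {r s : ℝ}

theorem mono (hγ : ClassK γ) (hr : 0 ≤ r) (hrs : r ≤ s) : γ r ≤ γ s :=
  hγ.2.1.monotoneOn hr (hr.trans hrs) hrs

theorem nonneg_s6 (hγ : ClassK γ) (hr : 0 ≤ r) : 0 ≤ γ r :=
  hγ.2.2.symm.trans_le (hγ.mono le_rfl hr)

theorem map_max (hγ : ClassK γ) (hr : 0 ≤ r) (hs : 0 ≤ s) : γ (max r s) = max (γ r) (γ s) :=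
  hγ.2.1.monotoneOn.map_max hr hs

theorem id : ClassK id :=
  ⟨continuousOn_id, strictMonoOn_id, rfl⟩

theorem add (hγ : ClassK γ) (hδ : ClassK δ) : ClassK fun r => γ r + δ r :=
  ⟨hγ.1.add hδ.1, fun _ hx _ hy hxy => add_lt_add (hγ.2.1 hx hy hxy) (hδ.2.1 hx hy hxy), by
    simp only [hγ.2.2, hδ.2.2, add_zero]⟩

theorem comp (hγ : ClassK γ) (hδ : ClassK δ) : ClassK (γ ∘ δ) :=
  have hmaps : MapsTo δ (Ici 0) (Ici 0) := fun _ => hδ.nonneg_s6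
  ⟨hγ.1.comp hδ.1 hmaps, hγ.2.1.comp hδ.2.1 hmaps, by
    rw [Function.comp_apply, hδ.2.2, hγ.2.2]⟩

theorem iterate (hγ : ClassK γ) (n : ℕ) : ClassK γ^[n] := by
  induction n with
  | zero => exact ClassK.id
  | succ n ih => exact ih.comp hγ

theorem tendsto_nhdsGE_zero (hγ : ClassK γ) : Tendsto γ (𝓝[≥] 0) (𝓝 0) := by
  simpa only [ContinuousWithinAt, hγ.2.2] using hγ.1 0 self_mem_Ici

end ClassK

namespace ClassKL

variable {β δ : ℝ → ℝ → ℝ} {r t : ℝ}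

theorem nonneg_s6 (hβ : ClassKL β) (hr : 0 ≤ r) (ht : 0 ≤ t) : 0 ≤ β r t :=
  (hβ.2.1 t ht).nonneg_s6 hr

theorem antitoneOn (hβ : ClassKL β) (hr : 0 ≤ r) : AntitoneOn (β r) (Ici 0) := by
  rcases hr.eq_or_lt with rfl | hr
  · exact fun t ht t' ht' _ => ((hβ.2.1 t' ht').2.2.trans (hβ.2.1 t ht).2.2.symm).le
  · exact (hβ.2.2 r hr).1.antitoneOn

theorem tendsto_nhdsGE_zero (hβ : ClassKL β) (hr : 0 < r) : Tendsto (β r) atTop (𝓝[≥] 0) :=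
  tendsto_nhdsWithin_iff.2
    ⟨(hβ.2.2 r hr).2, (eventually_ge_atTop 0).mono fun _ => hβ.nonneg_s6 hr.le⟩

theorem classK_comp {a : ℝ → ℝ} (ha : ClassK a) (hβ : ClassKL β) :
    ClassKL fun r t => a (β r t) := by
  refine ⟨ha.1.comp hβ.1 fun p hp => hβ.nonneg_s6 hp.1 hp.2, fun t ht => ha.comp (hβ.2.1 t ht),
    fun r hr => ⟨?_, ha.tendsto_nhdsGE_zero.comp (hβ.tendsto_nhdsGE_zero hr)⟩⟩
  exact ha.2.1.comp_strictAntiOn (hβ.2.2 r hr).1 fun t ht => hβ.nonneg_s6 hr.le ht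

theorem div_one_add : ClassKL fun r t => r / (1 + t) := by
  have hpos : ∀ {t : ℝ}, t ∈ Ici 0 → 0 < 1 + t := fun ht => add_pos_of_pos_of_nonneg one_pos ht
  refine ⟨?_, fun t ht => ⟨by fun_prop, ?_, zero_div _⟩, fun r hr => ⟨?_, ?_⟩⟩
  · exact ContinuousOn.div (by fun_prop) (by fun_prop) fun p hp => (hpos hp.2).ne'
  · exact fun x _ y _ hxy => div_lt_div_of_pos_right hxy (hpos ht)
  · exact fun t ht t' _ htt' => div_lt_div_of_pos_left hr (hpos ht) (by linarith)
  · exact (tendsto_atTop_add_const_left _ _ tendsto_id).const_div_atTop r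

-- A merely monotone change of time loses strict decay in `t`; the summand `δ` restores it.
theorem comp_time_add (hβ : ClassKL β) (hδ : ClassKL δ) {τ : ℝ → ℝ}
    (hcont : ContinuousOn τ (Ici 0)) (hmono : MonotoneOn τ (Ici 0))
    (hmaps : MapsTo τ (Ici 0) (Ici 0)) (hlim : Tendsto τ atTop atTop) :
    ClassKL fun r t => β r (τ t) + δ r t := by
  refine ⟨ContinuousOn.add ?_ hδ.1, fun t ht => (hβ.2.1 _ (hmaps ht)).add (hδ.2.1 t ht),
    fun r hr => ⟨?_, ?_⟩⟩
  · have hsnd : ContinuousOn (fun p : ℝ × ℝ => τ p.2) (Ici 0 ×ˢ Ici 0) :=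
      hcont.comp continuousOn_snd fun p hp => hp.2
    exact hβ.1.comp (continuousOn_fst.prodMk hsnd) fun p hp => ⟨hp.1, hmaps hp.2⟩
  · exact ((hβ.antitoneOn hr.le).comp_MonotoneOn hmono hmaps).add_strictAnti (hδ.2.2 r hr).1
  · simpa only [add_zero, Function.comp_apply] using ((hβ.2.2 r hr).2.comp hlim).add (hδ.2.2 r hr).2

theorem exists_natDiv_le (hβ : ClassKL β) {M : ℕ} (hM : 0 < M) :
    ∃ β', ClassKL β' ∧ ∀ r : ℝ, 0 ≤ r → ∀ k : ℕ, β r (k / M : ℕ) ≤ β' r k := by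
  have hM' : (0 : ℝ) < M := Nat.cast_pos.2 hM
  let τ : ℝ → ℝ := fun t => max (t / M - 1) 0
  have hτ_mono : Monotone τ := fun t t' htt' => by dsimp only [τ]; gcongr
  have hτ_lim : Tendsto τ atTop atTop :=
    tendsto_atTop_mono (fun _ => le_max_left _ _) <|
      tendsto_atTop_add_const_right _ _ (tendsto_id.atTop_div_const hM')
  have hτ_le (k : ℕ) : τ k ≤ (k / M : ℕ) := by
    refine max_le ?_ (Nat.cast_nonneg _)
    rw [← Nat.floor_div_eq_div (K := ℝ)]
    exact (Nat.sub_one_lt_floor _).le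
  refine ⟨_, hβ.comp_time_add div_one_add (τ := τ) (by fun_prop) (hτ_mono.monotoneOn _)
    (fun _ _ => mem_Ici.2 (le_max_right _ _)) hτ_lim, fun r hr k => ?_⟩
  calc β r (k / M : ℕ) ≤ β r (τ k) :=
        hβ.antitoneOn hr (mem_Ici.2 (le_max_right _ _)) (mem_Ici.2 (Nat.cast_nonneg _)) (hτ_le k)
    _ ≤ β r (τ k) + r / (1 + k) := le_add_of_nonneg_right (by positivity)

end ClassKL

section ScalarRecursion

theorem ClassK.le_iterate_of_succ_le {σ : ℝ → ℝ} (hσ : ClassK σ) (hle : ∀ r, 0 ≤ r → r ≤ σ r)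
    {w : ℕ → ℝ} (hw : ∀ n, 0 ≤ w n) (hstep : ∀ n, w (n + 1) ≤ σ (w n)) {j n : ℕ} (hjn : j ≤ n) :
    w j ≤ σ^[n] (w 0) := by
  induction n generalizing j with
  | zero => exact (congrArg w (Nat.le_zero.1 hjn)).le
  | succ n ih =>
    rw [Function.iterate_succ_apply']
    cases j with
    | zero => exact (ih n.zero_le).trans (hle _ ((hσ.iterate n).nonneg_s6 (hw 0)))
    | succ j => exact (hstep j).trans (hσ.mono (hw j) (ih (Nat.succ_le_succ_iff.1 hjn)))

variable {κ₁ κ₂ : ℝ → ℝ}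

theorem exists_finiteHorizon_gain (hκ₁ : ClassK κ₁) (hκ₂ : ClassK κ₂) (M : ℕ) :
    ∃ a, ClassK a ∧ ∀ (v : ℕ → ℝ) (s : ℝ), (∀ n, 0 ≤ v n) → 0 ≤ s →
      (∀ n, v (n + 1) ≤ κ₁ (v n) + κ₂ s) → ∀ j ≤ M, v j ≤ a (max (v 0) s) := by
  let σ : ℝ → ℝ := fun r => r + (κ₁ r + κ₂ r)
  have hσ : ClassK σ := ClassK.id.add (hκ₁.add hκ₂)
  have hσ_le (r : ℝ) (hr : 0 ≤ r) : r ≤ σ r :=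
    le_add_of_nonneg_right (add_nonneg (hκ₁.nonneg_s6 hr) (hκ₂.nonneg_s6 hr))
  refine ⟨σ^[M], hσ.iterate M, fun v s hv hs hstep j hj => ?_⟩
  have hmax (n : ℕ) : 0 ≤ max (v n) s := le_max_of_le_right hs
  have hmax_step (n : ℕ) : max (v (n + 1)) s ≤ σ (max (v n) s) := by
    refine max_le ?_ ((le_max_right _ _).trans (hσ_le _ (hmax n)))
    calc v (n + 1) ≤ κ₁ (v n) + κ₂ s := hstep n
      _ ≤ κ₁ (max (v n) s) + κ₂ (max (v n) s) :=
          add_le_add (hκ₁.mono (hv n) (le_max_left _ _)) (hκ₂.mono hs (le_max_right _ _))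
      _ ≤ σ (max (v n) s) := le_add_of_nonneg_left (hmax n)
  exact (le_max_left _ _).trans
    (hσ.le_iterate_of_succ_le hσ_le (w := fun n => max (v n) s) hmax hmax_step hj)

theorem exists_classKL_bound_of_multiples (hκ₁ : ClassK κ₁) (hκ₂ : ClassK κ₂)
    {β : ℝ → ℝ → ℝ} {γ : ℝ → ℝ} (hβ : ClassKL β) (hγ : ClassK γ) {M : ℕ} (hM : 0 < M) :
    ∃ β' γ', ClassKL β' ∧ ClassK γ' ∧ ∀ (v : ℕ → ℝ) (s : ℝ), (∀ n, 0 ≤ v n) → 0 ≤ s →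
      (∀ n, v (n + 1) ≤ κ₁ (v n) + κ₂ s) →
      (∀ k : ℕ, v (M * k) ≤ max (β (v 0) k) (γ s)) →
      ∀ k : ℕ, v k ≤ max (β' (v 0) k) (γ' s) := by
  obtain ⟨a, ha, hva⟩ := exists_finiteHorizon_gain hκ₁ hκ₂ M
  obtain ⟨β', hβ', hββ'⟩ := (hβ.classK_comp ha).exists_natDiv_le hM
  refine ⟨β', a ∘ fun s => γ s + s, hβ', ha.comp (hγ.add ClassK.id),
    fun v s hv hs hstep hmul k => ?_⟩
  have hγs : 0 ≤ γ s := hγ.nonneg_s6 hs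
  have hβv : 0 ≤ β (v 0) (k / M : ℕ) := hβ.nonneg_s6 (hv 0) (Nat.cast_nonneg _)
  have hblock : v (M * (k / M)) ≤ max (β (v 0) (k / M : ℕ)) (γ s + s) :=
    (hmul _).trans (max_le_max_left _ (le_add_of_nonneg_right hs))
  calc v k = v (M * (k / M) + k % M) := by rw [Nat.div_add_mod]
    _ ≤ a (max (v (M * (k / M))) s) :=
        hva (fun j => v (M * (k / M) + j)) s (fun _ => hv _) hs (fun _ => hstep _) _
          (Nat.mod_lt k hM).le
    _ ≤ a (max (β (v 0) (k / M : ℕ)) (γ s + s)) :=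
        ha.mono (le_max_of_le_right hs)
          (max_le hblock (le_max_of_le_right (le_add_of_nonneg_left hγs)))
    _ = max (a (β (v 0) (k / M : ℕ))) (a (γ s + s)) := ha.map_max hβv (add_nonneg hγs hs)
    _ ≤ max (β' (v 0) k) (a (γ s + s)) := max_le_max_right _ (hββ' _ (hv 0) k)

end ScalarRecursion

theorem inputNorm_nonneg (u : ℕ → lp P ⊤) : 0 ≤ inputNorm u :=
  Real.iSup_nonneg fun _ => norm_nonneg _

theorem AdmInput.norm_le_inputNorm {u : ℕ → lp P ⊤} (hu : AdmInput u) (k : ℕ) :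
    ‖u k‖ ≤ inputNorm u :=
  le_ciSup (f := fun k => ‖u k‖) (hu.imp fun _ hC => forall_mem_range.2 hC) k

variable {F : lp E ⊤ → lp P ⊤ → lp E ⊤} {A : Set (lp E ⊤)}

theorem ISS.kBounded (h : ISS F A) : KBounded F A := by
  obtain ⟨β, γ, hβ, hγ, hbound⟩ := h
  have hβ₁ : ClassK fun r => β r 1 := hβ.2.1 1 zero_le_one
  refine ⟨_, γ, hβ₁, hγ, fun ξ μ => ?_⟩
  have hone : Metric.infDist (F ξ μ) A ≤ max (β (Metric.infDist ξ A) 1) (γ ‖μ‖) := by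
    simpa only [traj, inputNorm, ciSup_const, Nat.cast_one]
      using hbound ξ (fun _ => μ) ⟨‖μ‖, fun _ => le_rfl⟩ 1
  exact hone.trans (max_le_add_of_nonneg (hβ₁.nonneg_s6 Metric.infDist_nonneg)
    (hγ.nonneg_s6 (norm_nonneg μ)))

theorem KBounded.iss_of_multiples (hF : KBounded F A) {β : ℝ → ℝ → ℝ} {γ : ℝ → ℝ}
    (hβ : ClassKL β) (hγ : ClassK γ) {M : ℕ} (hM : 0 < M)
    (hbound : ∀ (ξ : lp E ⊤) (u : ℕ → lp P ⊤), AdmInput u → ∀ k : ℕ,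
      Metric.infDist (traj F ξ u (M * k)) A ≤
        max (β (Metric.infDist ξ A) k) (γ (inputNorm u))) :
    ISS F A := by
  obtain ⟨κ₁, κ₂, hκ₁, hκ₂, hstep⟩ := hF
  obtain ⟨β', γ', hβ', hγ', hscalar⟩ := exists_classKL_bound_of_multiples hκ₁ hκ₂ hβ hγ hM
  refine ⟨β', γ', hβ', hγ', fun ξ u hu => ?_⟩
  refine hscalar (fun k => Metric.infDist (traj F ξ u k) A) (inputNorm u)
    (fun _ => Metric.infDist_nonneg) (inputNorm_nonneg u) (fun n => ?_) (hbound ξ u hu)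
  calc Metric.infDist (traj F ξ u (n + 1)) A
      ≤ κ₁ (Metric.infDist (traj F ξ u n) A) + κ₂ ‖u n‖ := hstep _ _
    _ ≤ κ₁ (Metric.infDist (traj F ξ u n) A) + κ₂ (inputNorm u) := by
        gcongr
        exact hκ₂.mono (norm_nonneg _) (hu.norm_le_inputNorm n)

theorem stmt6_general (F : lp E ⊤ → lp P ⊤ → lp E ⊤) (A : Set (lp E ⊤)) (_hAne : A.Nonempty) :
    ISS F A ↔
      (KBounded F A ∧
        ∃ M : ℕ, 0 < M ∧ ∃ β γ : _, ClassKL β ∧ ClassK γ ∧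
          ∀ (ξ : lp E ⊤) (u : ℕ → lp P ⊤), AdmInput u →
            ∀ k : ℕ, Metric.infDist (traj F ξ u (M * k)) A ≤
              max (β (Metric.infDist ξ A) (k : ℝ)) (γ (inputNorm u))) := by
  constructor
  · intro h
    refine ⟨h.kBounded, 1, one_pos, ?_⟩
    simpa only [one_mul, ISS] using h
  · rintro ⟨hF, M, hM, β, γ, hβ, hγ, hbound⟩
    exact hF.iss_of_multiples hβ hγ hM hbound

/-- ISS of `Σ` is equivalent to `K`-boundedness of `f` together with ISS of some
`M`-iterate `Σ^M`. -/
theorem stmt6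
    [∀ i, NormedSpace ℝ (E i)] [∀ i, FiniteDimensional ℝ (E i)] [∀ i, Nontrivial (E i)]
    [∀ i, NormedSpace ℝ (P i)] [∀ i, FiniteDimensional ℝ (P i)] [∀ i, Nontrivial (P i)]
    (F : lp E ⊤ → lp P ⊤ → lp E ⊤)
    (A : Set (lp E ⊤)) (hAne : A.Nonempty) (hAcl : IsClosed A) :
    ISS F A ↔
      (KBounded F A ∧
        ∃ M : ℕ, 0 < M ∧ ∃ β γ : _, ClassKL β ∧ ClassK γ ∧
          ∀ (ξ : lp E ⊤) (u : ℕ → lp P ⊤), AdmInput u →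
            ∀ k : ℕ, Metric.infDist (traj F ξ u (M * k)) A ≤
              max (β (Metric.infDist ξ A) (k : ℝ)) (γ (inputNorm u))) :=
  stmt6_general F A hAne

end System
end
end

section
/- Consider the network on X = ℓ∞(ℕ,ℝ) given by x_i⁺ = (i/(i+1)) x_i + u, i ∈ ℕ, where all subsystems share the common scalar input u ∈ ℝ. For every ε > 0, the solution starting from the zero initial state with the constant input u(k) ≡ ε satisfies |x(k)|_∞ = ε·k for every k ∈ ℕ₀, so the trajectory is unbounded. Consequently, this network is not ISS with respect to {0}: there are no β of class KL and γ of class K such that |x(k,ξ,u)|_∞ ≤ max{β(|ξ|_∞, k), γ(‖u‖_∞)} for all k ∈ ℕ₀, all ξ ∈ X and all bounded inputs u. -/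
noncomputable section

/-- Solution of the network `x_i⁺ = (i/(i+1)) x_i + u` (indices `i = 1, 2, …`,
here realized by the coefficient `(i+1)/(i+2)` for `i : ℕ`), where all subsystems
share the common scalar input `u`. -/
def traj18 (ξ : ℕ → ℝ) (u : ℕ → ℝ) : ℕ → ℕ → ℝ
  | 0 => ξ
  | k + 1 => fun i => ((i : ℝ) + 1) / ((i : ℝ) + 2) * traj18 ξ u k i + u k

/-!
From the zero state, a constant input `ε` gives `x_i(k) = (1 + a_i + ⋯ + a_i^(k-1)) ε`, where `a_i`
is the coefficient of the `i`-th subsystem. Each subsystem is bounded in time when `|a_i| < 1`, but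
since the `a_i` come arbitrarily close to `1`, the supremum over `i` is the value `k ε` of this
expression at `a_i = 1`. An ISS estimate would bound it by a constant, since `β(0, ·) = 0`.
-/

/-- The solution of the decoupled network `x_i⁺ = a_i x_i + u` with a common scalar input, over an
arbitrary index type and with arbitrary coefficients. The time comes before the index, as in
`traj18`. -/
def diagTraj {ι 𝕜 : Type*} [Semiring 𝕜] (a ξ : ι → 𝕜) (u : ℕ → 𝕜) : ℕ → ι → 𝕜
  | 0 => ξ
  | k + 1 => fun i => a i * diagTraj a ξ u k i + u k

theorem diagTraj_const {ι 𝕜 : Type*} [Semiring 𝕜] (a ξ : ι → 𝕜) (ε : 𝕜) (k : ℕ) (i : ι) :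
    diagTraj a ξ (fun _ => ε) k i = a i ^ k * ξ i + (∑ j ∈ Finset.range k, a i ^ j) * ε := by
  induction k with
  | zero => simp [diagTraj]
  | succ k ih =>
    simp only [diagTraj, ih, geom_sum_succ, pow_succ', mul_add, add_mul, one_mul,
      mul_assoc, add_assoc]

theorem norm_geom_sum_le {R : Type*} [SeminormedRing R] [NormOneClass R] {x : R} (hx : ‖x‖ ≤ 1)
    (k : ℕ) : ‖∑ j ∈ Finset.range k, x ^ j‖ ≤ k := by
  calc ‖∑ j ∈ Finset.range k, x ^ j‖
      ≤ ∑ _j ∈ Finset.range k, (1 : ℝ) :=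
        norm_sum_le_of_le _ fun j _ => (norm_pow_le x j).trans (pow_le_one₀ (norm_nonneg x) hx)
    _ = k := by simp

section RCLike

variable {ι 𝕜 : Type*} [RCLike 𝕜] {a : ι → 𝕜}

theorem isLUB_norm_diagTraj_zero_const (ha : ∀ i, ‖a i‖ ≤ 1) (h1 : 1 ∈ closure (Set.range a))
    (ε : 𝕜) (k : ℕ) :
    IsLUB (Set.range fun i => ‖diagTraj a 0 (fun _ => ε) k i‖) (‖ε‖ * k) := by
  let f : 𝕜 → ℝ := fun x => ‖(∑ j ∈ Finset.range k, x ^ j) * ε‖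
  have traj_eq : (fun i => ‖diagTraj a 0 (fun _ => ε) k i‖) = f ∘ a := by
    ext i
    simp [f, diagTraj_const]
  have f_le : ∀ i, f (a i) ≤ ‖ε‖ * k := fun i => by
    calc f (a i) = ‖∑ j ∈ Finset.range k, a i ^ j‖ * ‖ε‖ := norm_mul _ _
      _ ≤ k * ‖ε‖ := by gcongr; exact norm_geom_sum_le (ha i) k
      _ = ‖ε‖ * k := mul_comm _ _
  have f_one : f 1 = ‖ε‖ * k := by simp [f, mul_comm]
  have f_cont : Continuous f := by fun_prop
  rw [traj_eq]
  refine isLUB_of_mem_closure (Set.forall_mem_range.2 f_le) ?_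
  rw [← f_one, Set.range_comp]
  exact image_closure_subset_closure_image f_cont (Set.mem_image_of_mem f h1)

theorem iSup_norm_diagTraj_zero_const (ha : ∀ i, ‖a i‖ ≤ 1) (h1 : 1 ∈ closure (Set.range a))
    (ε : 𝕜) (k : ℕ) : ⨆ i, ‖diagTraj a 0 (fun _ => ε) k i‖ = ‖ε‖ * k :=
  have : Nonempty ι := Set.range_nonempty_iff_nonempty.1 (closure_nonempty_iff.1 ⟨1, h1⟩)
  (isLUB_norm_diagTraj_zero_const ha h1 ε k).ciSup_eq

theorem stmt18_general (ha : ∀ i, ‖a i‖ ≤ 1) (h1 : 1 ∈ closure (Set.range a)) :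
    (∀ (ε : 𝕜) (k : ℕ), ⨆ i, ‖diagTraj a 0 (fun _ => ε) k i‖ = ‖ε‖ * k) ∧
    ¬ ∃ (β : ℝ → ℝ → ℝ) (γ : ℝ → ℝ), BddAbove (Set.range fun k : ℕ => β 0 k) ∧
        ∀ ξ : ι → 𝕜, (∃ C : ℝ, ∀ i, ‖ξ i‖ ≤ C) →
          ∀ u : ℕ → 𝕜, (∃ C : ℝ, ∀ k, ‖u k‖ ≤ C) →
            ∀ k : ℕ, (⨆ i, ‖diagTraj a ξ u k i‖) ≤
              max (β (⨆ i, ‖ξ i‖) (k : ℝ)) (γ (⨆ k, ‖u k‖)) := by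
  refine ⟨iSup_norm_diagTraj_zero_const ha h1, ?_⟩
  rintro ⟨β, γ, ⟨B, hB⟩, hISS⟩
  obtain ⟨k, hk⟩ := exists_nat_gt (max B (γ 1))
  have k_le : (k : ℝ) ≤ max (β 0 k) (γ 1) := by
    simpa [iSup_norm_diagTraj_zero_const ha h1] using
      hISS 0 ⟨0, by simp⟩ (fun _ => 1) ⟨1, by simp⟩ k
  have β_le : β 0 k ≤ B := hB (Set.mem_range_self k)
  exact hk.not_ge (k_le.trans (max_le_max_right _ β_le))

end RCLike

/-- The coefficients of the network of `traj18`. The index is shifted as there: `coeff18 i` is the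
coefficient of the subsystem with number `i + 1`. -/
def coeff18 (i : ℕ) : ℝ := ((i : ℝ) + 1) / ((i : ℝ) + 2)

theorem traj18_eq_diagTraj (ξ u : ℕ → ℝ) : traj18 ξ u = diagTraj coeff18 ξ u := by
  ext k i
  induction k with
  | zero => rfl
  | succ k ih => simp only [traj18, diagTraj, ih, coeff18]

theorem norm_coeff18_le_one (i : ℕ) : ‖coeff18 i‖ ≤ 1 := by
  rw [coeff18, Real.norm_of_nonneg (by positivity), div_le_one (by positivity)]
  linarith

theorem one_mem_closure_range_coeff18 : 1 ∈ closure (Set.range coeff18) := by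
  have tendsto_one : Filter.Tendsto coeff18 Filter.atTop (nhds 1) := by
    refine ((tendsto_natCast_div_add_atTop (1 : ℝ)).comp (Filter.tendsto_add_atTop_nat 1)).congr
      fun i => ?_
    simp only [Function.comp_apply, coeff18, Nat.cast_add, Nat.cast_one]
    ring
  exact mem_closure_of_tendsto tendsto_one (.of_forall Set.mem_range_self)

theorem ClassKL.bddAbove_range_zero {β : ℝ → ℝ → ℝ} (hβ : ClassKL β) :
    BddAbove (Set.range fun k : ℕ => β 0 k) :=
  ⟨0, Set.forall_mem_range.2 fun k => (hβ.2.1 k k.cast_nonneg).2.2.le⟩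

/-- The network `x_i⁺ = (i/(i+1)) x_i + u` exhibits unbounded trajectories for
arbitrarily small constant inputs, hence it is not ISS with respect to `{0}`. -/
theorem stmt18 :
    (∀ ε : ℝ, 0 < ε → ∀ k : ℕ,
      (⨆ i, |traj18 (fun _ => 0) (fun _ => ε) k i|) = ε * k) ∧
    ¬ ∃ β γ : _, ClassKL β ∧ ClassK γ ∧
        ∀ ξ : ℕ → ℝ, (∃ C : ℝ, ∀ i, |ξ i| ≤ C) →
          ∀ u : ℕ → ℝ, (∃ C : ℝ, ∀ k, |u k| ≤ C) →
            ∀ k : ℕ, (⨆ i, |traj18 ξ u k i|) ≤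
              max (β (⨆ i, |ξ i|) (k : ℝ)) (γ (⨆ k, |u k|)) := by
  simp only [traj18_eq_diagTraj]
  obtain ⟨hsup, hnot⟩ := stmt18_general norm_coeff18_le_one one_mem_closure_range_coeff18
  exact ⟨fun ε hε k => (hsup ε k).trans (by rw [Real.norm_of_nonneg hε.le]),
    fun ⟨β, γ, hβ, _, hISS⟩ => hnot ⟨β, γ, hβ.bddAbove_range_zero, hISS⟩⟩
end
end
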